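/- Let σ > 0, L > 0, ρ > 0, and let F : ℝ^d → [0,1] be an L-Lipschitz function. Define F̃(x) = E_{δ ~ N(0, σ²I)}[F(x + δ)] and assume 0 < F̃(x′) < 1 for all x′ in the closed Euclidean ball B(x, ρ). For each x′ ∈ B(x, ρ) let s₀(x′) be a solution of F̃(x′) = 1 − L · ∫_{s₀(x′)}^{s₀(x′) + 1/L} Φ_σ(s) ds. If K ≥ 0 satisfies L · (Φ_σ(s₀(x′) + 1/L) − Φ_σ(s₀(x′))) / φ(Φ⁻¹(F̃(x′))) ≤ K for every x′ ∈ B(x, ρ), then the function Φ⁻¹ ∘ F̃ is K-Lipschitz on B(x, ρ). -/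

import Mathlib

open MeasureTheory Real

/-- Density of the Gaussian measure `N(0, σ²I)` on `ℝ^d`. -/
noncomputable def gaussPDFd (d : ℕ) (σ : ℝ) (δ : EuclideanSpace ℝ (Fin d)) : ℝ :=
  (2 * π * σ ^ 2) ^ (-(d : ℝ) / 2) * Real.exp (-‖δ‖ ^ 2 / (2 * σ ^ 2))

/-- Gaussian smoothing: `F̃ x = E_{δ ~ N(0, σ²I)} [F (x + δ)]`. -/
noncomputable def smoothed (d : ℕ) (σ : ℝ) (F : EuclideanSpace ℝ (Fin d) → ℝ)
    (x : EuclideanSpace ℝ (Fin d)) : ℝ :=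
  ∫ δ, F (x + δ) * gaussPDFd d σ δ

/-- Density of the one-dimensional Gaussian distribution `N(0, σ²)`. -/
noncomputable def gaussPDF1 (σ t : ℝ) : ℝ :=
  (Real.sqrt (2 * π * σ ^ 2))⁻¹ * Real.exp (-t ^ 2 / (2 * σ ^ 2))

/-- Cumulative distribution function `Φ_σ` of `N(0, σ²)`. -/
noncomputable def gaussCDF1 (σ x : ℝ) : ℝ := ∫ t in Set.Iic x, gaussPDF1 σ t

/-- Standard normal density `φ`. -/
noncomputable def stdGaussPDF (t : ℝ) : ℝ := gaussPDF1 1 t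

/-- Standard normal cumulative distribution function `Φ`. -/
noncomputable def stdGaussCDF (x : ℝ) : ℝ := gaussCDF1 1 x

/-- Standard normal quantile function `Φ⁻¹`. -/
noncomputable def stdGaussQuantile : ℝ → ℝ := Function.invFun stdGaussCDF

namespace QSL

open ProbabilityTheory Set Filter Topology
open scoped NNReal ENNReal RealInnerProductSpace


noncomputable def var (σ : ℝ) : ℝ≥0 := Real.toNNReal (σ ^ 2)

lemma var_ne {σ : ℝ} (hσ : 0 < σ) : var σ ≠ 0 := by
  unfold var; have : 0 < σ ^ 2 := by positivity
  simpa using this.ne'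

lemma var_coe (σ : ℝ) : ((var σ : ℝ≥0) : ℝ) = σ ^ 2 := Real.coe_toNNReal _ (sq_nonneg σ)

noncomputable def g1 (σ : ℝ) : Measure ℝ := gaussianReal 0 (var σ)

instance (σ : ℝ) : IsProbabilityMeasure (g1 σ) := by unfold g1; infer_instance

lemma pdf1_eq (σ : ℝ) : gaussPDF1 σ = gaussianPDFReal 0 (var σ) := by
  ext t; simp [gaussPDF1, gaussianPDFReal, var_coe]

lemma integral_g1 {σ : ℝ} (hσ : 0 < σ) (f : ℝ → ℝ) :
    ∫ t, f t ∂(g1 σ) = ∫ t, gaussPDF1 σ t * f t := by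
  rw [g1, integral_gaussianReal_eq_integral_smul (var_ne hσ), pdf1_eq]; rfl

lemma cdf_eq {σ : ℝ} (hσ : 0 < σ) (s : ℝ) : gaussCDF1 σ s = (g1 σ).real (Iic s) := by
  rw [gaussCDF1, measureReal_def, g1, gaussianReal_apply_eq_integral _ (var_ne hσ), pdf1_eq,
    ENNReal.toReal_ofReal]
  exact setIntegral_nonneg measurableSet_Iic fun t _ => gaussianPDFReal_nonneg _ _ _

noncomputable def gd (d : ℕ) (σ : ℝ) : Measure (EuclideanSpace ℝ (Fin d)) :=
  volume.withDensity (fun δ => ENNReal.ofReal (gaussPDFd d σ δ))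

lemma pdfd_nonneg (d : ℕ) (σ : ℝ) (δ) : 0 ≤ gaussPDFd d σ δ := by
  unfold gaussPDFd; positivity

lemma pdfd_meas (d : ℕ) (σ : ℝ) : Measurable (gaussPDFd d σ) := by
  unfold gaussPDFd; fun_prop

lemma pdfd_integral (d : ℕ) {σ : ℝ} (hσ : 0 < σ) : ∫ δ, gaussPDFd d σ δ = 1 := by
  unfold gaussPDFd
  rw [integral_const_mul]
  have h := GaussianFourier.integral_rexp_neg_mul_sq_norm (V := EuclideanSpace ℝ (Fin d))
    (b := (2 * σ ^ 2)⁻¹) (by positivity)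
  have h2 : ∀ δ : EuclideanSpace ℝ (Fin d), -‖δ‖ ^ 2 / (2 * σ ^ 2) = -(2 * σ ^ 2)⁻¹ * ‖δ‖ ^ 2 := by
    intro δ; field_simp
  simp_rw [h2, h]
  have h3 : π / (2 * σ ^ 2)⁻¹ = 2 * π * σ ^ 2 := by field_simp
  rw [h3, ← Real.rpow_add (by positivity)]
  simp [neg_div]

lemma integral_gd (d : ℕ) {E : Type*} [NormedAddCommGroup E] [NormedSpace ℝ E] (σ : ℝ)
    (f : EuclideanSpace ℝ (Fin d) → E) :
    ∫ δ, f δ ∂(gd d σ) = ∫ δ, gaussPDFd d σ δ • f δ := by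
  rw [gd, integral_withDensity_eq_integral_toReal_smul (pdfd_meas d σ).ennreal_ofReal
    (by simp)]
  simp_rw [ENNReal.toReal_ofReal (pdfd_nonneg d σ _)]

lemma gd_prob (d : ℕ) {σ : ℝ} (hσ : 0 < σ) : IsProbabilityMeasure (gd d σ) := by
  constructor
  have hi : Integrable (gaussPDFd d σ) := by
    by_contra h
    have := pdfd_integral d hσ
    rw [integral_undef h] at this
    norm_num at this
  rw [gd, withDensity_apply _ MeasurableSet.univ, setLIntegral_univ,
    ← ofReal_integral_eq_lintegral_ofReal hi (ae_of_all _ (pdfd_nonneg d σ)), pdfd_integral d hσ]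
  simp

lemma smoothed_eq (d : ℕ) (σ : ℝ) (F : EuclideanSpace ℝ (Fin d) → ℝ) (x) :
    smoothed d σ F x = ∫ δ, F (x + δ) ∂(gd d σ) := by
  rw [integral_gd, smoothed]; simp_rw [smul_eq_mul, mul_comm]

lemma charFun_gd (d : ℕ) {σ : ℝ} (hσ : 0 < σ) (w : EuclideanSpace ℝ (Fin d)) :
    charFun (gd d σ) w = Complex.exp (-(σ ^ 2 * ‖w‖ ^ 2 / 2 : ℝ)) := by
  rw [charFun_apply, integral_gd]
  have hσc : (σ : ℂ) ≠ 0 := by exact_mod_cast hσ.ne'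
  have h := GaussianFourier.integral_cexp_neg_mul_sq_norm_add (V := EuclideanSpace ℝ (Fin d))
    (b := (((2 * σ ^ 2)⁻¹ : ℝ) : ℂ)) (by rw [Complex.ofReal_re]; positivity) Complex.I w
  have h1 : ∀ δ : EuclideanSpace ℝ (Fin d),
      gaussPDFd d σ δ • Complex.exp (⟪δ, w⟫ * Complex.I) =
      (((2 * π * σ ^ 2) ^ (-(d : ℝ) / 2) : ℝ) : ℂ) *
        Complex.exp (-(((2 * σ ^ 2)⁻¹ : ℝ) : ℂ) * ‖δ‖ ^ 2 + Complex.I * ⟪w, δ⟫) := by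
    intro δ
    rw [gaussPDFd, Complex.exp_add, Complex.real_smul, real_inner_comm, Complex.ofReal_mul,
      Complex.ofReal_exp, mul_assoc]
    congr 2
    · congr 1; push_cast; field_simp
    · rw [mul_comm]
  simp_rw [h1]
  rw [integral_const_mul, h]
  have h3 : (π : ℂ) / (((2 * σ ^ 2)⁻¹ : ℝ) : ℂ) = ((2 * π * σ ^ 2 : ℝ) : ℂ) := by
    push_cast; field_simp
  have h4 : ((Module.finrank ℝ (EuclideanSpace ℝ (Fin d)) : ℂ) / 2) = (((d : ℝ) / 2 : ℝ) : ℂ) := by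
    simp
  rw [h3, h4, ← Complex.ofReal_cpow (by positivity), ← mul_assoc, ← Complex.ofReal_mul,
    ← Real.rpow_add (by positivity)]
  simp only [neg_div, neg_add_cancel, Real.rpow_zero, Complex.ofReal_one, one_mul]
  congr 1
  push_cast
  rw [Complex.I_sq]
  field_simp
  norm_num

/-- Splitting of the Gaussian along a unit direction. -/
lemma map_split (d : ℕ) {σ : ℝ} (hσ : 0 < σ) (v : EuclideanSpace ℝ (Fin d)) (hv : ‖v‖ = 1) :
    ((g1 σ).prod (gd d σ)).map (fun p => p.1 • v + (p.2 - ⟪v, p.2⟫ • v)) = gd d σ := by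
  have := gd_prob d hσ
  have hm : Measurable (fun p : ℝ × EuclideanSpace ℝ (Fin d) =>
      p.1 • v + (p.2 - ⟪v, p.2⟫ • v)) := by fun_prop
  have : IsProbabilityMeasure
    (((g1 σ).prod (gd d σ)).map (fun p => p.1 • v + (p.2 - ⟪v, p.2⟫ • v))) :=
    Measure.isProbabilityMeasure_map hm.aemeasurable
  apply Measure.ext_of_charFun
  ext w
  rw [charFun_gd d hσ, charFun_apply, integral_map hm.aemeasurable
    (by apply Measurable.aestronglyMeasurable; fun_prop)]
  have h1 : ∀ p : ℝ × EuclideanSpace ℝ (Fin d),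
      Complex.exp ((⟪p.1 • v + (p.2 - ⟪v, p.2⟫ • v), w⟫ : ℝ) * Complex.I) =
      Complex.exp ((⟪p.1, ⟪v, w⟫⟫ : ℝ) * Complex.I) *
      Complex.exp ((⟪p.2, w - ⟪v, w⟫ • v⟫ : ℝ) * Complex.I) := by
    intro p
    rw [← Complex.exp_add, ← add_mul, ← Complex.ofReal_add]
    congr 3
    simp only [inner_add_left, inner_sub_left, inner_sub_right, real_inner_smul_left,
      real_inner_smul_right, real_inner_comm v p.2]
    simp
    ring
  simp_rw [h1]
  rw [integral_prod_mul (fun t : ℝ => Complex.exp ((⟪t, ⟪v, w⟫⟫ : ℝ) * Complex.I))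
    (fun δ => Complex.exp ((⟪δ, w - ⟪v, w⟫ • v⟫ : ℝ) * Complex.I)), ← charFun_apply,
    ← charFun_apply, charFun_gd d hσ, g1, charFun_gaussianReal, ← Complex.exp_add]
  congr 1
  have h5 : ‖w - ⟪v, w⟫ • v‖ ^ 2 = ‖w‖ ^ 2 - ⟪v, w⟫ ^ 2 := by
    rw [norm_sub_sq_real, norm_smul, hv, real_inner_smul_right, real_inner_comm]
    simp
    ring
  have h6 : (((var σ : ℝ≥0) : ℝ) : ℂ) = (σ : ℂ) ^ 2 := by rw [var_coe]; push_cast; rfl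
  rw [h5, h6]
  push_cast
  ring


/-! ### One-dimensional facts -/

lemma pdf1_pos {σ : ℝ} (hσ : 0 < σ) (t : ℝ) : 0 < gaussPDF1 σ t := by
  rw [pdf1_eq]; exact gaussianPDFReal_pos _ _ _ (var_ne hσ)

lemma pdf1_cont (σ : ℝ) : Continuous (gaussPDF1 σ) := by
  unfold gaussPDF1; fun_prop

lemma pdf1_integrable (σ : ℝ) : Integrable (gaussPDF1 σ) := by
  rw [pdf1_eq]; exact integrable_gaussianPDFReal _ _

lemma cdf_hasDeriv (σ : ℝ) (s : ℝ) : HasDerivAt (gaussCDF1 σ) (gaussPDF1 σ s) s := by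
  have h : gaussCDF1 σ = fun s => gaussCDF1 σ 0 + ∫ t in (0:ℝ)..s, gaussPDF1 σ t := by
    ext s
    rw [← intervalIntegral.integral_Iic_sub_Iic (pdf1_integrable σ).integrableOn
      (pdf1_integrable σ).integrableOn]
    unfold gaussCDF1
    ring
  rw [h]
  exact ((pdf1_cont σ).integral_hasStrictDerivAt 0 s).hasDerivAt.const_add _

lemma cdf_cont (σ : ℝ) : Continuous (gaussCDF1 σ) :=
  continuous_iff_continuousAt.2 fun s => (cdf_hasDeriv σ s).continuousAt

lemma cdf_strictMono {σ : ℝ} (hσ : 0 < σ) : StrictMono (gaussCDF1 σ) :=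
  strictMono_of_hasDerivAt_pos (cdf_hasDeriv σ) (pdf1_pos hσ)

lemma cdf_eq_cdf {σ : ℝ} (hσ : 0 < σ) : gaussCDF1 σ = fun s => cdf (g1 σ) s := by
  ext s; rw [cdf_eq hσ, cdf_eq_real]

lemma std_surj {p : ℝ} (hp : p ∈ Ioo (0:ℝ) 1) : ∃ s, stdGaussCDF s = p := by
  have hb : Tendsto (gaussCDF1 1) atBot (𝓝 0) := by
    rw [cdf_eq_cdf one_pos]; exact tendsto_cdf_atBot _
  have ht : Tendsto (gaussCDF1 1) atTop (𝓝 1) := by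
    rw [cdf_eq_cdf one_pos]; exact tendsto_cdf_atTop _
  obtain ⟨a, ha⟩ := (hb.eventually (gt_mem_nhds hp.1)).exists
  obtain ⟨b, hb'⟩ := (ht.eventually (lt_mem_nhds hp.2)).exists
  exact mem_range_of_exists_le_of_exists_ge (cdf_cont 1) ⟨a, ha.le⟩ ⟨b, hb'.le⟩

lemma std_right_inv {p : ℝ} (hp : p ∈ Ioo (0:ℝ) 1) : stdGaussCDF (stdGaussQuantile p) = p :=
  Function.invFun_eq (std_surj hp)

lemma std_left_inv (s : ℝ) : stdGaussQuantile (stdGaussCDF s) = s :=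
  Function.leftInverse_invFun (cdf_strictMono one_pos).injective s

lemma std_mem (s : ℝ) : stdGaussCDF s ∈ Ioo (0:ℝ) 1 := by
  have h := cdf_strictMono one_pos
  have h0 : ∀ s, 0 ≤ gaussCDF1 1 s := fun s => by rw [cdf_eq one_pos]; exact measureReal_nonneg
  have h1 : ∀ s, gaussCDF1 1 s ≤ 1 := fun s => by rw [cdf_eq one_pos]; exact measureReal_le_one
  exact ⟨(h0 (s - 1)).trans_lt (h (by linarith)), (h (by linarith)).trans_le (h1 (s + 1))⟩

lemma quantile_strictMonoOn : StrictMonoOn stdGaussQuantile (Ioo 0 1) := by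
  intro p hp q hq hpq
  by_contra h
  have := (cdf_strictMono one_pos).monotone (not_lt.1 h)
  change stdGaussCDF _ ≤ stdGaussCDF _ at this
  rw [std_right_inv hp, std_right_inv hq] at this
  linarith

lemma quantile_contAt {p : ℝ} (hp : p ∈ Ioo (0:ℝ) 1) : ContinuousAt stdGaussQuantile p := by
  apply quantile_strictMonoOn.continuousAt_of_image_mem_nhds (Ioo_mem_nhds hp.1 hp.2)
  convert univ_mem
  rw [eq_univ_iff_forall]
  intro s
  exact ⟨stdGaussCDF s, std_mem s, std_left_inv s⟩

lemma quantile_hasDeriv {p : ℝ} (hp : p ∈ Ioo (0:ℝ) 1) :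
    HasDerivAt stdGaussQuantile (stdGaussPDF (stdGaussQuantile p))⁻¹ p := by
  apply HasDerivAt.of_local_left_inverse (quantile_contAt hp)
    (f := stdGaussCDF) (cdf_hasDeriv 1 _) (pdf1_pos one_pos _).ne'
  filter_upwards [Ioo_mem_nhds hp.1 hp.2] with q hq using std_right_inv hq

/-- the extremal ramp -/
noncomputable def ramp (L s t : ℝ) : ℝ := max 0 (min 1 (L * (t - s)))

lemma ramp_cont (L s : ℝ) : Continuous (ramp L s) := by unfold ramp; fun_prop

lemma ramp_nonneg (L s t : ℝ) : 0 ≤ ramp L s t := le_max_left _ _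
lemma ramp_le_one (L s t : ℝ) : ramp L s t ≤ 1 := max_le zero_le_one (min_le_left _ _)

lemma ramp_repr {L : ℝ} (hL : 0 < L) (s t : ℝ) :
    ramp L s t = 1 - L * ∫ u in Ioc s (s + 1 / L), (Ici t).indicator (fun _ => (1:ℝ)) u := by
  have h1 : 0 < 1 / L := by positivity
  have h2 : L * (1 / L) = 1 := by field_simp
  rw [integral_indicator measurableSet_Ici, integral_const, smul_eq_mul, mul_one,
    measureReal_restrict_apply MeasurableSet.univ, univ_inter]
  rcases lt_or_ge s t with h | h
  · have : volume.real (Ici t ∩ Ioc s (s + 1/L)) = max (s + 1 / L - t) 0 := by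
      rw [← Real.volume_real_Icc]
      congr 1
      ext u; simp only [mem_inter_iff, mem_Ici, mem_Ioc, mem_Icc]
      constructor
      · rintro ⟨a, b, c⟩; exact ⟨a, c⟩
      · rintro ⟨a, c⟩; exact ⟨a, by linarith, c⟩
    rw [measureReal_restrict_apply measurableSet_Ici, this, ramp]
    rw [max_eq_right (le_min zero_le_one (mul_nonneg hL.le (by linarith)))]
    rcases le_total (s + 1 / L - t) 0 with h' | h'
    · rw [max_eq_right h', min_eq_left (by nlinarith)]; ring
    · rw [max_eq_left h', min_eq_right (by nlinarith)]; linarith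
  · have : volume.real (Ici t ∩ Ioc s (s + 1/L)) = 1 / L := by
      rw [inter_eq_right.2 (show Ioc s (s + 1 / L) ⊆ Ici t from fun u hu => h.trans hu.1.le)]
      simp [hL.le]
    rw [measureReal_restrict_apply measurableSet_Ici, this, ramp, h2]
    rw [max_eq_left]; · ring
    exact (min_le_right _ _).trans (by nlinarith)

lemma ramp_integral {L σ : ℝ} (hσ : 0 < σ) (hL : 0 < L) (s : ℝ) :
    ∫ t, ramp L s t ∂(g1 σ) = 1 - L * ∫ u in s..(s + 1 / L), gaussCDF1 σ u := by
  have h1 : 0 < 1 / L := by positivity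
  have hint : Integrable (Function.uncurry fun t u : ℝ => (Ici t).indicator (fun _ => (1:ℝ)) u)
      ((g1 σ).prod (volume.restrict (Ioc s (s + 1 / L)))) := by
    have : (Function.uncurry fun t u : ℝ => (Ici t).indicator (fun _ => (1:ℝ)) u)
        = {p : ℝ × ℝ | p.1 ≤ p.2}.indicator (fun _ => 1) := by
      ext ⟨t, u⟩; simp [indicator]
    rw [this]
    exact (integrable_const 1).indicator (measurableSet_le measurable_fst measurable_snd)
  simp_rw [ramp_repr hL]
  have hint2 : Integrable (fun t => L * ∫ u in Ioc s (s + 1 / L),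
      (Ici t).indicator (fun _ => (1:ℝ)) u) (g1 σ) := hint.integral_prod_left.const_mul L
  rw [integral_sub (integrable_const _) hint2,
    integral_const_mul, integral_integral_swap hint, intervalIntegral.integral_of_le (by linarith)]
  simp only [integral_const, probReal_univ, smul_eq_mul, mul_one]
  congr 3
  ext u
  rw [cdf_eq hσ, ← integral_indicator_one measurableSet_Iic]
  congr 1

lemma ramp_integral_hasDeriv {L σ : ℝ} (hσ : 0 < σ) (hL : 0 < L) (s : ℝ) :
    HasDerivAt (fun s => ∫ t, ramp L s t ∂(g1 σ))
      (-(L * (gaussCDF1 σ (s + 1 / L) - gaussCDF1 σ s))) s := by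
  have h : (fun s => ∫ t, ramp L s t ∂(g1 σ)) = fun s =>
      1 - L * ((∫ u in (0:ℝ)..(s + 1 / L), gaussCDF1 σ u) - ∫ u in (0:ℝ)..s, gaussCDF1 σ u) := by
    ext s
    rw [ramp_integral hσ hL, intervalIntegral.integral_interval_sub_left]
    · exact (cdf_cont σ).intervalIntegrable _ _
    · exact (cdf_cont σ).intervalIntegrable _ _
  rw [h]
  have h1 := ((cdf_cont σ).integral_hasStrictDerivAt 0 s).hasDerivAt
  have h2 := ((cdf_cont σ).integral_hasStrictDerivAt 0 (s + 1 / L)).hasDerivAt.comp_add_const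
    s (1 / L)
  exact ((h2.sub h1).const_mul L).const_sub 1

/-- single crossing -/
lemma crossing {L s : ℝ} (hL : 0 < L) (g : ℝ → ℝ) (h0 : ∀ t, 0 ≤ g t) (h1 : ∀ t, g t ≤ 1)
    (hg : ∀ t t', |g t - g t'| ≤ L * |t - t'|) (hc : Continuous g) :
    ∃ c, (∀ t ≤ c, ramp L s t ≤ g t) ∧ ∀ t, c ≤ t → g t ≤ ramp L s t := by
  have hp : 0 < 1 / L := by positivity
  have h2 : L * (1 / L) = 1 := by field_simp
  have hlow : ∀ t ≤ s, ramp L s t = 0 := fun t ht =>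
    max_eq_left ((min_le_right _ _).trans (by nlinarith))
  have hhigh : ∀ t, s + 1 / L ≤ t → ramp L s t = 1 := fun t ht => by
    rw [ramp, min_eq_left (by nlinarith)]; simp
  have hmid : ∀ t, s ≤ t → t ≤ s + 1 / L → ramp L s t = L * (t - s) := fun t ht ht' => by
    rw [ramp, min_eq_right (by nlinarith), max_eq_right (by nlinarith)]
  obtain ⟨c, ⟨hc1, hc2⟩, hc0⟩ : ∃ c ∈ Icc s (s + 1 / L), g c - ramp L s c = 0 := by
    have := intermediate_value_Icc' (a := s) (b := s + 1 / L) (by linarith)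
      (hc.sub (ramp_cont L s)).continuousOn
    apply this
    constructor
    · show g (s + 1 / L) - ramp L s (s + 1 / L) ≤ 0
      rw [hhigh (s + 1 / L) le_rfl]; linarith [h1 (s + 1 / L)]
    · show 0 ≤ g s - ramp L s s
      rw [hlow s le_rfl]; linarith [h0 s]
  have ec := hmid c hc1 hc2
  refine ⟨c, fun t ht => ?_, fun t ht => ?_⟩
  · rcases le_total t s with h | h
    · rw [hlow t h]; exact h0 t
    · rw [hmid t h (by linarith)]
      have := (abs_le.1 (hg c t)).2
      rw [abs_of_nonneg (by linarith)] at this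
      linarith
  · rcases le_total (s + 1 / L) t with h | h
    · rw [hhigh t h]; exact h1 t
    · rw [hmid t (by linarith) h]
      have := (abs_le.1 (hg t c)).2
      rw [abs_of_nonneg (by linarith)] at this
      linarith

lemma g1_integrable {σ : ℝ} (f : ℝ → ℝ) (hf : Continuous f) (h0 : ∀ t, 0 ≤ f t)
    (h1 : ∀ t, f t ≤ 1) : Integrable f (g1 σ) :=
  Integrable.of_bound hf.aestronglyMeasurable 1
    (ae_of_all _ fun t => by rw [Real.norm_eq_abs, abs_of_nonneg (h0 t)]; exact h1 t)

lemma compare {L s σ h : ℝ} (hσ : 0 < σ) (hL : 0 < L) (hh : 0 ≤ h) (g : ℝ → ℝ)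
    (h0 : ∀ t, 0 ≤ g t) (h1 : ∀ t, g t ≤ 1)
    (hg : ∀ t t', |g t - g t'| ≤ L * |t - t'|) (hc : Continuous g)
    (heq : ∫ t, g t ∂(g1 σ) = ∫ t, ramp L s t ∂(g1 σ)) :
    ∫ t, g (t + h) ∂(g1 σ) ≤ ∫ t, ramp L (s - h) t ∂(g1 σ) := by
  obtain ⟨c, hc1, hc2⟩ := crossing (s := s) hL g h0 h1 hg hc
  have hr : ∀ t, ramp L (s - h) t = ramp L s (t + h) := fun t => by
    unfold ramp; congr 3; ring
  simp_rw [hr]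
  set D : ℝ → ℝ := fun t => g t - ramp L s t with hD
  have hDc : Continuous D := hc.sub (ramp_cont L s)
  have hDb : ∀ t, |D t| ≤ 1 := fun t => by
    have := ramp_nonneg L s t; have := ramp_le_one L s t
    have := h0 t; have := h1 t
    rw [abs_le]; constructor <;> simp only [hD] <;> linarith
  have hDi : ∀ a, Integrable (fun t => gaussPDF1 σ (t - a) * D t) := fun a => by
    apply ((pdf1_integrable σ).comp_sub_right a).mul_bdd (c := 1) hDc.aestronglyMeasurable
    exact ae_of_all _ hDb
  have e0 : ∫ t, gaussPDF1 σ t * D t = 0 := by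
    rw [← integral_g1 hσ, integral_sub (g1_integrable _ hc h0 h1)
      (g1_integrable _ (ramp_cont _ _) (ramp_nonneg _ _) (ramp_le_one _ _)), heq, sub_self]
  suffices ∫ t, D (t + h) ∂(g1 σ) ≤ 0 by
    have i1 : Integrable (fun t => g (t + h)) (g1 σ) :=
      g1_integrable _ (by fun_prop) (fun _ => h0 _) (fun _ => h1 _)
    have i2 : Integrable (fun t => ramp L s (t + h)) (g1 σ) :=
      g1_integrable _ ((ramp_cont L s).comp (continuous_add_const h))
        (fun _ => ramp_nonneg _ _ _) (fun _ => ramp_le_one _ _ _)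
    have := (integral_sub i1 i2).symm.trans_le this
    linarith
  rw [integral_g1 hσ]
  have e1 : ∫ t, gaussPDF1 σ t * D (t + h) = ∫ t, gaussPDF1 σ (t - h) * D t := by
    rw [← integral_add_right_eq_self (fun t => gaussPDF1 σ (t - h) * D t) h]
    simp
  rw [e1]
  set k : ℝ := Real.exp ((2 * c * h - h ^ 2) / (2 * σ ^ 2)) with hk
  have hshift : ∀ t, gaussPDF1 σ (t - h) =
      Real.exp ((2 * t * h - h ^ 2) / (2 * σ ^ 2)) * gaussPDF1 σ t := fun t => by
    unfold gaussPDF1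
    rw [mul_left_comm, ← Real.exp_add]
    congr 2
    ring
  calc ∫ t, gaussPDF1 σ (t - h) * D t ≤ ∫ t, k * (gaussPDF1 σ t * D t) := by
        apply integral_mono (hDi h) (by simpa using (hDi 0).const_mul k)
        intro t
        simp only [hshift t]
        have hp := pdf1_pos hσ t
        rcases le_total t c with ht | ht
        · have : Real.exp ((2 * t * h - h ^ 2) / (2 * σ ^ 2)) ≤ k := by
            rw [hk]; gcongr
          have hd : 0 ≤ D t := sub_nonneg.2 (hc1 t ht)
          rw [mul_assoc]
          exact mul_le_mul_of_nonneg_right this (by positivity)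
        · have : k ≤ Real.exp ((2 * t * h - h ^ 2) / (2 * σ ^ 2)) := by
            rw [hk]; gcongr
          have hd : D t ≤ 0 := sub_nonpos.2 (hc2 t ht)
          rw [mul_assoc]
          exact mul_le_mul_of_nonpos_right this (mul_nonpos_of_nonneg_of_nonpos hp.le hd)
    _ = 0 := by rw [integral_const_mul, e0, mul_zero]

section
variable {d : ℕ} {σ L : ℝ} (F : EuclideanSpace ℝ (Fin d) → ℝ)

lemma F_cont (hlip : ∀ z z', |F z - F z'| ≤ L * ‖z - z'‖) : Continuous F := by
  have : LipschitzWith (Real.toNNReal L) F := by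
    apply LipschitzWith.of_dist_le_mul
    intro z z'
    rw [Real.dist_eq, dist_eq_norm]
    exact (hlip z z').trans (mul_le_mul_of_nonneg_right (Real.le_coe_toNNReal L) (norm_nonneg _))
  exact this.continuous

lemma F_integrable {α : Type*} [MeasurableSpace α] (μ : Measure α) [IsProbabilityMeasure μ]
    (hc : Continuous F) (hrange : ∀ z, F z ∈ Icc (0 : ℝ) 1)
    (φ : α → EuclideanSpace ℝ (Fin d)) (hφ : Measurable φ) : Integrable (fun a => F (φ a)) μ :=
  Integrable.of_bound (hc.measurable.comp hφ).aestronglyMeasurable 1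
    (ae_of_all _ fun t => by
      rw [Real.norm_eq_abs, abs_of_nonneg (hrange _).1]; exact (hrange _).2)

lemma integral_F_lip {α : Type*} [MeasurableSpace α] (μ : Measure α) [IsProbabilityMeasure μ]
    (hrange : ∀ z, F z ∈ Icc (0 : ℝ) 1)
    (hlip : ∀ z z', |F z - F z'| ≤ L * ‖z - z'‖)
    (φ ψ : α → EuclideanSpace ℝ (Fin d)) (hφ : Measurable φ) (hψ : Measurable ψ) (r : ℝ)
    (hr : ∀ a, L * ‖φ a - ψ a‖ ≤ r) :
    |∫ a, F (φ a) ∂μ - ∫ a, F (ψ a) ∂μ| ≤ r := by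
  have hc := F_cont F hlip
  rw [← integral_sub (F_integrable F μ hc hrange φ hφ) (F_integrable F μ hc hrange ψ hψ)]
  have := norm_integral_le_of_norm_le_const (μ := μ) (f := fun a => F (φ a) - F (ψ a)) (C := r)
    (ae_of_all _ fun a => (hlip _ _).trans (hr a))
  simpa using this

lemma smoothed_lip (hσ : 0 < σ) (hrange : ∀ z, F z ∈ Icc (0 : ℝ) 1)
    (hlip : ∀ z z', |F z - F z'| ≤ L * ‖z - z'‖) (x y) :
    |smoothed d σ F x - smoothed d σ F y| ≤ L * ‖x - y‖ := by
  have := gd_prob d hσ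
  rw [smoothed_eq, smoothed_eq]
  exact integral_F_lip F _ hrange hlip (fun δ => x + δ) (fun δ => y + δ) (by fun_prop)
    (by fun_prop) _ (fun a => by simp)

lemma smoothed_step (hσ : 0 < σ) (hL : 0 < L) (hrange : ∀ z, F z ∈ Icc (0 : ℝ) 1)
    (hlip : ∀ z z', |F z - F z'| ≤ L * ‖z - z'‖) (x v : EuclideanSpace ℝ (Fin d))
    (hv : ‖v‖ = 1) {h s : ℝ} (hh : 0 ≤ h)
    (hs : smoothed d σ F x = ∫ t, ramp L s t ∂(g1 σ)) :
    smoothed d σ F (x + h • v) ≤ ∫ t, ramp L (s - h) t ∂(g1 σ) := by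
  have := gd_prob d hσ
  have hc := F_cont F hlip
  set g : ℝ → ℝ := fun t => ∫ δ, F (x + t • v + (δ - ⟪v, δ⟫ • v)) ∂(gd d σ) with hg
  have key : ∀ h : ℝ, smoothed d σ F (x + h • v) = ∫ t, g (t + h) ∂(g1 σ) := by
    intro h
    rw [smoothed_eq]
    conv_lhs => rw [← map_split d hσ v hv]
    have hm : Measurable (fun p : ℝ × EuclideanSpace ℝ (Fin d) =>
      p.1 • v + (p.2 - ⟪v, p.2⟫ • v)) := by fun_prop
    have hm2 : Continuous (fun δ => F (x + h • v + δ)) := by fun_prop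
    rw [integral_map hm.aemeasurable hm2.aestronglyMeasurable, integral_prod]
    · simp only [hg]
      congr with t
      congr with δ
      congr 1
      module
    · exact F_integrable F _ hc hrange _ (by fun_prop)
  have hgl : ∀ t t', |g t - g t'| ≤ L * |t - t'| := fun t t' => by
    refine integral_F_lip F _ hrange hlip _ _ (by fun_prop) (by fun_prop) _ (fun a => ?_)
    have : x + t • v + (a - ⟪v, a⟫ • v) - (x + t' • v + (a - ⟪v, a⟫ • v)) = (t - t') • v := by
      module
    rw [this, norm_smul, hv, mul_one, Real.norm_eq_abs]
  have hgc : Continuous g := by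
    have : LipschitzWith (Real.toNNReal L) g := by
      apply LipschitzWith.of_dist_le_mul
      intro z z'
      rw [Real.dist_eq, Real.dist_eq, Real.coe_toNNReal _ hL.le]
      exact hgl z z'
    exact this.continuous
  rw [key]
  refine compare hσ hL hh g (fun t => integral_nonneg fun _ => (hrange _).1) (fun t => ?_) hgl hgc ?_
  · have := integral_mono (F_integrable F (gd d σ) hc hrange
      (fun δ => x + t • v + (δ - ⟪v, δ⟫ • v)) (by fun_prop)) (integrable_const 1)
      (fun δ => (hrange _).2)
    simpa using this
  · rw [← hs]
    have := key 0
    simpa using this.symm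

lemma onesided {ρ K : ℝ}
    (hσ : 0 < σ) (hL : 0 < L)
    (hrange : ∀ z, F z ∈ Set.Icc (0 : ℝ) 1)
    (hlip : ∀ z z', |F z - F z'| ≤ L * ‖z - z'‖)
    (x : EuclideanSpace ℝ (Fin d))
    (hx : ∀ x' ∈ Metric.closedBall x ρ, smoothed d σ F x' ∈ Set.Ioo (0 : ℝ) 1)
    (s₀ : EuclideanSpace ℝ (Fin d) → ℝ)
    (hs₀ : ∀ x' ∈ Metric.closedBall x ρ,
      smoothed d σ F x' = 1 - L * ∫ s in (s₀ x')..(s₀ x' + 1 / L), gaussCDF1 σ s)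
    (hKbound : ∀ x' ∈ Metric.closedBall x ρ,
      L * (gaussCDF1 σ (s₀ x' + 1 / L) - gaussCDF1 σ (s₀ x'))
        / stdGaussPDF (stdGaussQuantile (smoothed d σ F x')) ≤ K)
    (x' : EuclideanSpace ℝ (Fin d)) (hx' : x' ∈ Metric.closedBall x ρ)
    (x'' : EuclideanSpace ℝ (Fin d)) (hx'' : x'' ∈ Metric.closedBall x ρ) :
    stdGaussQuantile (smoothed d σ F x'') - stdGaussQuantile (smoothed d σ F x')
        ≤ K * ‖x' - x''‖ := by
  rcases eq_or_ne x' x'' with rfl | hne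
  · simp
  set ℓ := ‖x'' - x'‖ with hℓ
  have hℓ0 : 0 < ℓ := norm_pos_iff.2 (sub_ne_zero.2 hne.symm)
  set v := ℓ⁻¹ • (x'' - x') with hv
  have hv1 : ‖v‖ = 1 := by
    rw [hv, norm_smul, norm_inv, Real.norm_of_nonneg hℓ0.le, ← hℓ]; field_simp
  have hend : x' + ℓ • v = x'' := by
    rw [hv, smul_smul, mul_inv_cancel₀ hℓ0.ne', one_smul]; abel
  have hmem : ∀ y ∈ Icc 0 ℓ, x' + y • v ∈ Metric.closedBall x ρ := by
    intro y hy
    have := (convex_closedBall x ρ).add_smul_sub_mem hx' hx'' (t := y * ℓ⁻¹)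
      ⟨mul_nonneg hy.1 (by positivity), by rw [← div_eq_mul_inv, div_le_one hℓ0]; exact hy.2⟩
    rwa [hv, smul_smul]
  have hSc : Continuous (smoothed d σ F) := F_cont _ (smoothed_lip F hσ hrange hlip)
  set u : ℝ → ℝ := fun y => stdGaussQuantile (smoothed d σ F (x' + y • v)) with hu
  have huc : ContinuousOn u (Icc 0 ℓ) := by
    intro y hy
    have h1 : ContinuousAt (fun y : ℝ => smoothed d σ F (x' + y • v)) y :=
      (hSc.comp (by fun_prop : Continuous fun y : ℝ => x' + y • v)).continuousAt
    exact (ContinuousAt.comp (f := fun y : ℝ => smoothed d σ F (x' + y • v))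
      (quantile_contAt (hx _ (hmem y hy))) h1).continuousWithinAt
  have main := image_le_of_liminf_slope_right_le_deriv_boundary (f := u) (a := 0) (b := ℓ) huc
    (B := fun y => u 0 + K * y) (B' := fun _ => K) (by simp) (by fun_prop)
    (fun y _ => by
      simpa using (((hasDerivAt_id y).const_mul K).const_add (u 0)).hasDerivWithinAt) ?_
    (right_mem_Icc.2 hℓ0.le)
  · simp only [hu, hend, zero_smul, add_zero] at main
    rw [norm_sub_rev]
    linarith
  intro y hy r hr
  have hyI : y ∈ Icc 0 ℓ := ⟨hy.1, hy.2.le⟩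
  set z := x' + y • v with hz
  have hzm := hmem y hyI
  set G : ℝ → ℝ := fun s => ∫ t, ramp L s t ∂(g1 σ) with hG
  have hGs : smoothed d σ F z = G (s₀ z) := by
    rw [hG, hs₀ z hzm]; exact (ramp_integral hσ hL _).symm
  have hp := hx z hzm
  have hin : HasDerivAt (fun q : ℝ => s₀ z - (q - y)) (-1) y := by
    simpa using ((hasDerivAt_id y).sub_const y).const_sub (s₀ z)
  have hGd : HasDerivAt (fun q => G (s₀ z - (q - y)))
      (-(L * (gaussCDF1 σ (s₀ z + 1 / L) - gaussCDF1 σ (s₀ z))) * -1) y := by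
    refine HasDerivAt.comp (h₂ := G) (h := fun q : ℝ => s₀ z - (q - y)) y ?_ hin
    simpa using ramp_integral_hasDeriv hσ hL (s₀ z)
  have hG0 : G (s₀ z - (y - y)) = smoothed d σ F z := by rw [hGs]; simp
  have hwd : HasDerivAt (fun q => stdGaussQuantile (G (s₀ z - (q - y))))
      ((stdGaussPDF (stdGaussQuantile (smoothed d σ F z)))⁻¹ *
      (-(L * (gaussCDF1 σ (s₀ z + 1 / L) - gaussCDF1 σ (s₀ z))) * -1)) y := by
    refine HasDerivAt.comp (h₂ := stdGaussQuantile) (h := fun q => G (s₀ z - (q - y))) y ?_ hGd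
    rw [hG0]
    exact quantile_hasDeriv hp
  have hlt : (stdGaussPDF (stdGaussQuantile (smoothed d σ F z)))⁻¹ *
      (-(L * (gaussCDF1 σ (s₀ z + 1 / L) - gaussCDF1 σ (s₀ z))) * -1) < r := by
    refine lt_of_le_of_lt (le_of_eq_of_le ?_ (hKbound z hzm)) hr
    rw [div_eq_mul_inv]; ring
  have hsl := (hasDerivAt_iff_tendsto_slope.1 hwd).mono_left
    (nhdsWithin_mono y (show Ioi y ⊆ {y}ᶜ from fun q hq => (mem_Ioi.1 hq).ne'))
  have hev := hsl.eventually (gt_mem_nhds hlt)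
  have hGin : ∀ᶠ q in 𝓝[>] y, G (s₀ z - (q - y)) ∈ Ioo (0:ℝ) 1 := by
    apply nhdsWithin_le_nhds
    apply hGd.continuousAt.eventually
    show ∀ᶠ q in 𝓝 (G (s₀ z - (y - y))), q ∈ Ioo (0:ℝ) 1
    rw [hG0]
    exact Ioo_mem_nhds hp.1 hp.2
  apply Eventually.frequently
  filter_upwards [hev, hGin, Ioc_mem_nhdsGT hy.2] with q hq1 hq2 hq3
  refine lt_of_le_of_lt ?_ hq1
  rw [slope_def_field, slope_def_field]
  have hyq : 0 < q - y := sub_pos.2 hq3.1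
  have hqm := hmem q ⟨hy.1.trans hq3.1.le, hq3.2⟩
  have hstep := smoothed_step F hσ hL hrange hlip z v hv1 hyq.le hGs
  have hzq : z + (q - y) • v = x' + q • v := by rw [hz]; module
  rw [hzq] at hstep
  have hmono := quantile_strictMonoOn.monotoneOn (hx _ hqm) hq2 hstep
  rw [hG0]
  gcongr

end

lemma main (d : ℕ) (σ L ρ K : ℝ)
    (hσ : 0 < σ) (hL : 0 < L)
    (F : EuclideanSpace ℝ (Fin d) → ℝ)
    (hrange : ∀ z, F z ∈ Set.Icc (0 : ℝ) 1)
    (hlip : ∀ z z', |F z - F z'| ≤ L * ‖z - z'‖)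
    (x : EuclideanSpace ℝ (Fin d))
    (hx : ∀ x' ∈ Metric.closedBall x ρ, smoothed d σ F x' ∈ Set.Ioo (0 : ℝ) 1)
    (s₀ : EuclideanSpace ℝ (Fin d) → ℝ)
    (hs₀ : ∀ x' ∈ Metric.closedBall x ρ,
      smoothed d σ F x' = 1 - L * ∫ s in (s₀ x')..(s₀ x' + 1 / L), gaussCDF1 σ s)
    (hKbound : ∀ x' ∈ Metric.closedBall x ρ,
      L * (gaussCDF1 σ (s₀ x' + 1 / L) - gaussCDF1 σ (s₀ x'))
        / stdGaussPDF (stdGaussQuantile (smoothed d σ F x')) ≤ K) :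
    ∀ x' ∈ Metric.closedBall x ρ, ∀ x'' ∈ Metric.closedBall x ρ,
      |stdGaussQuantile (smoothed d σ F x') - stdGaussQuantile (smoothed d σ F x'')|
        ≤ K * ‖x' - x''‖ := by
  intro x' h' x'' h''
  have h1 := onesided F hσ hL hrange hlip x hx s₀ hs₀ hKbound x' h' x'' h''
  have h2 := onesided F hσ hL hrange hlip x hx s₀ hs₀ hKbound x'' h'' x' h'
  rw [norm_sub_rev] at h2
  rw [abs_le]
  constructor <;> linarith

end QSL

/-- **Local Lipschitz bound for `Φ⁻¹ ∘ F̃` (Theorem 2).** Let `F : ℝ^d → [0,1]` be `L`-Lipschitz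
with Gaussian smoothing `F̃` taking values in `(0,1)` on the closed ball `B(x, ρ)`, and for each
`x'` in the ball let `s₀ x'` solve `F̃ x' = 1 - L ∫_{s₀ x'}^{s₀ x' + 1/L} Φ_σ(s) ds`. If `K ≥ 0`
dominates `L (Φ_σ(s₀ x' + 1/L) - Φ_σ(s₀ x')) / φ(Φ⁻¹(F̃ x'))` on the ball, then `Φ⁻¹ ∘ F̃` is
`K`-Lipschitz on `B(x, ρ)`. -/
theorem quantile_smoothed_locally_lipschitz (d : ℕ) (σ L ρ K : ℝ)
    (hσ : 0 < σ) (hL : 0 < L) (hρ : 0 < ρ) (hK : 0 ≤ K)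
    (F : EuclideanSpace ℝ (Fin d) → ℝ)
    (hrange : ∀ z, F z ∈ Set.Icc (0 : ℝ) 1)
    (hlip : ∀ z z', |F z - F z'| ≤ L * ‖z - z'‖)
    (x : EuclideanSpace ℝ (Fin d))
    (hx : ∀ x' ∈ Metric.closedBall x ρ, smoothed d σ F x' ∈ Set.Ioo (0 : ℝ) 1)
    (s₀ : EuclideanSpace ℝ (Fin d) → ℝ)
    (hs₀ : ∀ x' ∈ Metric.closedBall x ρ,
      smoothed d σ F x' = 1 - L * ∫ s in (s₀ x')..(s₀ x' + 1 / L), gaussCDF1 σ s)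
    (hKbound : ∀ x' ∈ Metric.closedBall x ρ,
      L * (gaussCDF1 σ (s₀ x' + 1 / L) - gaussCDF1 σ (s₀ x'))
        / stdGaussPDF (stdGaussQuantile (smoothed d σ F x')) ≤ K) :
    ∀ x' ∈ Metric.closedBall x ρ, ∀ x'' ∈ Metric.closedBall x ρ,
      |stdGaussQuantile (smoothed d σ F x') - stdGaussQuantile (smoothed d σ F x'')|
        ≤ K * ‖x' - x''‖ := by
  exact QSL.main d σ L ρ K hσ hL F hrange hlip x hx s₀ hs₀ hKbound
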